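/- Let K be a field of characteristic zero and B a commutative K-algebra that is an integral domain. Suppose no maximal ideal of B contains the image D(B) of every LND D of B; that is, for every maximal ideal m of B there exist an LND D of B and an element b ∈ B with D(b) ∉ m. Then HD*(B[u]) = B[u]. -/

import Mathlib

/-!
The kernel of `d/du` is `B`, and `d/du` has slice `u`, so `B ⊆ HD*(B[u])`; it remains to show that
`u ∈ HD*(B[u])`. For an LND `D` of `B`, extended coefficientwise to `B[u]`, and `c ∈ K`, the
operators `d/du` and `c D` commute and are locally nilpotent, so `d/du + c D` is an LND, again with
slice `u`. Its kernel contains the Taylor element `∑ (-c)^i / i! · u^i D^i(b)` for each `b ∈ B`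
(`twist_taylor`). As `c` ranges over the infinite field `K`, a Vandermonde-type argument
(`mem_of_forall_sum_pow_smul_mem`) puts each term of this sum in `HD*`, in particular `u D(b)`.
Hence the ideal `{b ∈ B | b u ∈ HD*}` of `B` contains the images of all LNDs of `B`. By hypothesis
it lies in no maximal ideal, so it contains `1`.
-/

/-- A K-derivation is locally nilpotent (an LND) if for every element `a`
there exists `n ≥ 1` with `D^[n] a = 0`. -/
def IsLND {K A : Type*} [CommRing K] [CommRing A] [Algebra K A]
    (D : Derivation K A A) : Prop :=
  ∀ a : A, ∃ n : ℕ, 1 ≤ n ∧ (⇑D)^[n] a = 0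

/-- The modified Derksen invariant `HD*(A)`: the K-subalgebra of `A` generated by
the union of the kernels of all LNDs of `A` that possess a slice. -/
def HDStar (K A : Type*) [CommRing K] [CommRing A] [Algebra K A] : Subalgebra K A :=
  Algebra.adjoin K {a : A | ∃ D : Derivation K A A, IsLND D ∧ (∃ s : A, D s = 1) ∧ D a = 0}

open Polynomial

/-- A polynomial function with coefficients in a vector space that takes values in a subspace `W`
has its coefficients in `W`: this is checked on the linear functionals of the quotient by `W`. -/
lemma mem_of_forall_sum_pow_smul_mem {K V : Type*} [Field K] [CharZero K] [AddCommGroup V]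
    [Module K V] (W : Submodule K V) (n : ℕ) (v : ℕ → V)
    (hv : ∀ c : K, ∑ i ∈ Finset.range n, c ^ i • v i ∈ W) (i : ℕ) (hi : i < n) : v i ∈ W := by
  rw [← Submodule.Quotient.mk_eq_zero, ← Module.forall_dual_apply_eq_zero_iff K]
  intro f
  have hp : (∑ j ∈ Finset.range n, C (f (W.mkQ (v j))) * X ^ j : K[X]) = 0 := by
    refine Polynomial.funext fun c => ?_
    have hc : W.mkQ (∑ j ∈ Finset.range n, c ^ j • v j) = 0 :=
      (Submodule.Quotient.mk_eq_zero W).2 (hv c)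
    have hfc := congrArg f hc
    simp only [map_sum, map_smul, map_zero, smul_eq_mul] at hfc
    simpa only [eval_finsetSum, eval_mul, eval_C, eval_pow, eval_X, eval_zero, mul_comm] using hfc
  have hcoeff := congrArg (fun p => coeff p i) hp
  simpa [finsetSum_coeff, coeff_C_mul, coeff_X_pow, hi] using hcoeff

section Twist

variable {K B : Type*} [Field K] [CommRing B] [Algebra K B]

/-- The extension of a derivation `D` of `B` to `B[u]` that applies `D` to each coefficient, so
that it kills `u`. -/
noncomputable def coeffDer (D : Derivation K B B) : Derivation K B[X] B[X] :=
  PolynomialModule.equivPolynomialSelf.toLinearMap.compDer D.mapCoeffs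

lemma coeff_coeffDer (D : Derivation K B B) (p : B[X]) (i : ℕ) :
    (coeffDer D p).coeff i = D (p.coeff i) := rfl

/-- The derivation `d/du + c D` of `B[u]`, with `D` acting on coefficients. -/
noncomputable def twist (D : Derivation K B B) (c : K) : Derivation K B[X] B[X] :=
  (derivative' (R := B)).restrictScalars K + c • coeffDer D

lemma twist_apply (D : Derivation K B B) (c : K) (p : B[X]) :
    twist D c p = derivative p + c • coeffDer D p := rfl

lemma coeffDer_monomial (D : Derivation K B B) (n : ℕ) (b : B) :
    coeffDer D (monomial n b) = monomial n (D b) := by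
  ext i
  simp only [coeff_coeffDer, coeff_monomial]
  split_ifs <;> simp

lemma coeff_coeffDer_iterate (D : Derivation K B B) (n : ℕ) (p : B[X]) (i : ℕ) :
    ((⇑(coeffDer D))^[n] p).coeff i = (⇑D)^[n] (p.coeff i) := by
  induction n generalizing p with
  | zero => rfl
  | succ n ih => rw [Function.iterate_succ_apply, ih, coeff_coeffDer,
      Function.iterate_succ_apply]

lemma iterate_eq_zero_of_le {A : Type*} [CommRing A] [Algebra K A] (D : Derivation K A A)
    {m n : ℕ} (hmn : m ≤ n) {a : A} (ha : (⇑D)^[m] a = 0) : (⇑D)^[n] a = 0 := by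
  obtain ⟨k, rfl⟩ := Nat.exists_eq_add_of_le' hmn
  rw [Function.iterate_add_apply, ha, iterate_map_zero]

lemma isLND_coeffDer {D : Derivation K B B} (hD : IsLND D) : IsLND (coeffDer D) := by
  intro p
  choose N hN hN0 using hD
  refine ⟨p.support.sup (fun i => N (p.coeff i)) + 1, by omega, ?_⟩
  ext i
  rw [coeff_coeffDer_iterate, coeff_zero]
  by_cases hi : i ∈ p.support
  · exact iterate_eq_zero_of_le D
      ((Finset.le_sup (f := fun i => N (p.coeff i)) hi).trans (Nat.le_succ _)) (hN0 _)
  · rw [notMem_support_iff.1 hi, iterate_map_zero]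

lemma isLND_twist {D : Derivation K B B} (hD : IsLND D) (c : K) : IsLND (twist D c) := by
  intro p
  obtain ⟨n, hn, hnp⟩ := isLND_coeffDer hD p
  let S : Module.End K B[X] := (derivative (R := B)).restrictScalars K
  let T : Module.End K B[X] := c • (coeffDer D : B[X] →ₗ[K] B[X])
  have hcomm : Commute S T := by
    refine LinearMap.ext fun q => ?_
    change derivative (c • coeffDer D q) = c • coeffDer D (derivative q)
    rw [derivative_smul]
    congr 1
    ext i
    have hcast : D ((i : B) + 1) = 0 := by
      rw [map_add, D.map_natCast, D.map_one_eq_zero, add_zero]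
    simp [coeff_coeffDer, coeff_derivative, hcast, mul_comm]
  have hS : ∀ j, p.natDegree + 1 ≤ j → (S ^ j) p = 0 := by
    intro j hj
    rw [Module.End.pow_apply]
    exact iterate_derivative_eq_zero (by omega)
  have hT : ∀ j, n ≤ j → (T ^ j) p = 0 := by
    intro j hj
    rw [_root_.smul_pow, LinearMap.smul_apply, Module.End.pow_apply]
    exact smul_eq_zero_of_right _ (iterate_eq_zero_of_le (coeffDer D) hj hnp)
  refine ⟨p.natDegree + 1 + n, by omega, ?_⟩
  have hpow : (⇑(twist D c))^[p.natDegree + 1 + n] p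
      = ((S + T) ^ (p.natDegree + 1 + n)) p := by
    rw [Module.End.pow_apply]; rfl
  rw [hpow, hcomm.add_pow', LinearMap.sum_apply]
  refine Finset.sum_eq_zero fun ij hij => ?_
  rw [Finset.HasAntidiagonal.mem_antidiagonal] at hij
  rw [LinearMap.smul_apply]
  refine smul_eq_zero_of_right _ ?_
  by_cases hi : p.natDegree + 1 ≤ ij.1
  · rw [(hcomm.pow_pow ij.1 ij.2).eq, Module.End.mul_apply, hS _ hi, map_zero]
  · rw [Module.End.mul_apply, hT _ (by omega), map_zero]

lemma twist_X (D : Derivation K B B) (c : K) : twist D c X = 1 := by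
  rw [twist_apply, derivative_X, ← monomial_one_one_eq_X, coeffDer_monomial,
    D.map_one_eq_zero, map_zero, smul_zero, add_zero]

/-- The truncated Taylor expansion of `b` at `-c u` along `D` is killed by `d/du + c D`:
`d/du` of each term cancels `c D` of the preceding one. -/
lemma twist_taylor [CharZero K] (D : Derivation K B B) (c : K) (n : ℕ) (b : B)
    (hb : (⇑D)^[n] b = 0) :
    twist D c (∑ i ∈ Finset.range (n + 1),
      c ^ i • (((-1) ^ i * (i.factorial : K)⁻¹) • monomial i ((⇑D)^[i] b))) = 0 := by
  rw [twist_apply, map_sum, map_sum, Finset.sum_range_succ', Finset.sum_range_succ, smul_add,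
    Finset.smul_sum]
  have hlast : coeffDer D (c ^ n • (((-1) ^ n * (n.factorial : K)⁻¹) •
      monomial n ((⇑D)^[n] b))) = 0 := by simp [hb]
  have hfirst : derivative (c ^ 0 • (((-1) ^ 0 * (Nat.factorial 0 : K)⁻¹) •
      monomial 0 ((⇑D)^[0] b))) = 0 := by simp
  rw [hlast, hfirst, smul_zero, add_zero, add_zero, ← Finset.sum_add_distrib]
  refine Finset.sum_eq_zero fun i _ => ?_
  have hmon : monomial i ((⇑D)^[i + 1] b * ((i + 1 : ℕ) : B))
      = ((i + 1 : ℕ) : K) • monomial i ((⇑D)^[i + 1] b) := by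
    rw [smul_monomial, Algebra.smul_def, map_natCast, mul_comm]
  rw [derivative_smul, derivative_smul, derivative_monomial, Nat.add_sub_cancel, hmon,
    Derivation.map_smul, Derivation.map_smul, coeffDer_monomial,
    ← Function.iterate_succ_apply' (⇑D), smul_smul, smul_smul, smul_smul, smul_smul, ← add_smul]
  refine smul_eq_zero_of_left ?_ _
  have h1 : ((i + 1 : ℕ) : K) ≠ 0 := Nat.cast_ne_zero.2 i.succ_ne_zero
  have h2 : (i.factorial : K) ≠ 0 := Nat.cast_ne_zero.2 i.factorial_ne_zero
  rw [Nat.factorial_succ, Nat.cast_mul]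
  field_simp
  ring

lemma mem_HDStar_of_twist {D : Derivation K B B} (hD : IsLND D) (c : K) {p : B[X]}
    (hp : twist D c p = 0) : p ∈ HDStar K B[X] :=
  Algebra.subset_adjoin ⟨twist D c, isLND_twist hD c, ⟨X, twist_X D c⟩, hp⟩

lemma C_mem_HDStar (b : B) : C b ∈ HDStar K B[X] := by
  have h0 : IsLND (0 : Derivation K B B) := fun a => ⟨1, le_rfl, rfl⟩
  refine mem_HDStar_of_twist h0 0 ?_
  rw [twist_apply, derivative_C, zero_smul, add_zero]

lemma monomial_one_mem_HDStar [CharZero K] {D : Derivation K B B} (hD : IsLND D) (b : B) :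
    monomial 1 (D b) ∈ HDStar K B[X] := by
  obtain ⟨n, hn, hnb⟩ := hD b
  have hmem := mem_of_forall_sum_pow_smul_mem (Subalgebra.toSubmodule (HDStar K B[X])) (n + 1)
    (fun i => ((-1) ^ i * (i.factorial : K)⁻¹) • monomial i ((⇑D)^[i] b))
    (fun c => mem_HDStar_of_twist hD c (twist_taylor D c n b hnb)) 1 (by omega)
  simpa using hmem

end Twist

theorem stmt5 {K B : Type*} [Field K] [CharZero K]
    [CommRing B] [IsDomain B] [Algebra K B]
    (h : ∀ m : Ideal B, m.IsMaximal → ∃ D : Derivation K B B, IsLND D ∧ ∃ b : B, D b ∉ m) :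
    HDStar K (Polynomial B) = ⊤ := by
  let I : Ideal B :=
    { carrier := {b | monomial 1 b ∈ HDStar K B[X]}
      add_mem' := fun {a b} ha hb => by
        simp only [Set.mem_ofPred_eq, map_add] at *
        exact add_mem ha hb
      zero_mem' := by
        simp only [Set.mem_ofPred_eq, map_zero]
        exact zero_mem _
      smul_mem' := fun a b hb => by
        simp only [Set.mem_ofPred_eq, smul_eq_mul] at *
        rw [← C_mul_monomial]
        exact mul_mem (C_mem_HDStar a) hb }
  have hI : I = ⊤ := by
    by_contra hne
    obtain ⟨m, hm, hIm⟩ := Ideal.exists_le_maximal I hne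
    obtain ⟨D, hD, b, hb⟩ := h m hm
    exact hb (hIm (monomial_one_mem_HDStar hD b))
  have hX : (X : B[X]) ∈ HDStar K B[X] := by
    have h1 : (1 : B) ∈ I := hI ▸ Submodule.mem_top
    rw [← monomial_one_one_eq_X]
    exact h1
  refine Algebra.eq_top_iff.2 fun p => ?_
  rw [p.as_sum_range_C_mul_X_pow]
  exact sum_mem fun i _ => mul_mem (C_mem_HDStar _) (pow_mem hX i)
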